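/- arXiv:1111.7294 — 6 statements merged into one kernel-verified Lean document; each statement's English description precedes it below -/
import Mathlib

section
/- Let E be a complex Hilbert space and let φ : E → E be an arbitrary mapping. There exists a constant M > 0 such that the kernel Φ_M(z,w) = M²·exp(⟨z,w⟩) − exp(⟨φ(z),φ(w)⟩) is a positive semi-definite kernel on E (equivalently, by Nordgren's criterion, the composition operator C_φ is bounded on the Segal–Bargmann space over E with norm at most M) if and only if there exist a bounded linear operator A on E with ‖A‖ ≤ 1 and a vector b ∈ E such that φ(z) = Az + b for all z ∈ E and A*b belongs to the range of (I − A*A)^{1/2}. -/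
open scoped InnerProductSpace ComplexOrder
open ContinuousLinearMap

/-- A function `Φ : X × X → ℂ` is a positive semi-definite kernel if for all finite families
of points `x j` and complex numbers `c j`, the sum `∑_{j,l} c j * conj (c l) * Φ (x l) (x j)`
is a nonnegative real number (expressed via the partial order on `ℂ`). -/
def IsPSDKernel {X : Type*} (Φ : X → X → ℂ) : Prop :=
  ∀ (m : ℕ) (x : Fin m → X) (c : Fin m → ℂ),
    0 ≤ ∑ j : Fin m, ∑ l : Fin m, c j * (starRingEnd ℂ) (c l) * Φ (x l) (x j)

/-- A bounded operator is positive: self-adjoint and with nonnegative quadratic form. -/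
def IsPosOp {E : Type*} [NormedAddCommGroup E] [InnerProductSpace ℂ E]
    (T : E →L[ℂ] E) : Prop :=
  (∀ x y : E, ⟪T x, y⟫_ℂ = ⟪x, T y⟫_ℂ) ∧ ∀ x : E, 0 ≤ ⟪T x, x⟫_ℂ

/-- `S` is the (unique) positive square root of `T`. -/
def IsPosSqrtOf {E : Type*} [NormedAddCommGroup E] [InnerProductSpace ℂ E]
    (S T : E →L[ℂ] E) : Prop :=
  IsPosOp S ∧ S ∘L S = T

/-!
Write `k z = exp ⟪z, ·⟫` for the kernel functions of the Segal–Bargmann space. Positivity of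
`M ^ 2 * exp ⟪z, w⟫ - exp ⟪φ z, φ w⟫` passes to `M ^ 2 * exp ⟪z, w⟫ - ⟪φ z, φ w⟫`, because `exp`
minus the linear term of its power series preserves positive semi-definiteness. Hence the linear
map `k z ↦ φ z` is bounded, and `z ↦ ⟪v, φ z⟫` is `z ↦ ⟪u, k z⟫` for some `u`, so it is entire
along complex lines. The diagonal gives `‖φ z‖ ^ 2 ≤ ‖z‖ ^ 2 + 2 * log M`, so by Liouville `φ` is
affine on every line, that is, `φ z = A z + b`. With `S ^ 2 = 1 - A* A`, optimizing
`‖A z + b‖ ^ 2 ≤ ‖z‖ ^ 2 + 2 * log M` over the complex multiples of `z` yields `‖A z‖ ≤ ‖z‖` and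
`‖⟪A* b, z⟫‖ ≤ const * ‖S z‖`, and the latter is what it takes for `A* b` to lie in the range of
`S`. Conversely, if `A* b = S u`, completing the square gives
`‖b‖ ^ 2 + ‖u‖ ^ 2 + ⟪z, w⟫ = ⟪φ z, φ w⟫ + ⟪S z - u, S w - u⟫`, so the difference of kernels with
`M ^ 2 = exp (‖b‖ ^ 2 + ‖u‖ ^ 2)` is `exp ⟪φ z, φ w⟫ * (exp ⟪S z - u, S w - u⟫ - 1)`.
-/

open Matrix Metric Complex

section PositiveSemidefinite

variable {𝕜 X : Type*} [RCLike 𝕜]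

lemma posSemidef_of_hasSum {ι : Type*} {F : ι → Matrix X X 𝕜} {B : Matrix X X 𝕜}
    (hF : ∀ n, (F n).PosSemidef) (hB : ∀ x y, HasSum (fun n => F n x y) (B x y)) :
    B.PosSemidef := by
  refine ⟨Matrix.ext fun x y => ?_, fun c => ?_⟩
  · exact (hB y x).star.unique ((hB x y).congr_fun fun n => (hF n).1.apply x y)
  · have hsum : HasSum (fun n => c.sum fun x cx => c.sum fun y cy => star cx * F n x y * cy)
        (c.sum fun x cx => c.sum fun y cy => star cx * B x y * cy) :=
      hasSum_sum fun x _ => hasSum_sum fun y _ => ((hB x y).mul_left _).mul_right _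
    exact hsum.nonneg fun n => (hF n).2 c

section Gram

variable {F H : Type*} [NormedAddCommGroup F] [InnerProductSpace 𝕜 F]
  [NormedAddCommGroup H] [InnerProductSpace 𝕜 H]

lemma finsuppSum_gram_eq_norm_sq (v : X → F) (c : X →₀ 𝕜) :
    (c.sum fun x cx => c.sum fun y cy => star cx * gram 𝕜 v x y * cy) =
      ((‖Finsupp.linearCombination 𝕜 v c‖ ^ 2 : ℝ) : 𝕜) := by
  rw [RCLike.ofReal_pow, ← inner_self_eq_norm_sq_to_K, Finsupp.linearCombination_apply,
    Finsupp.sum_inner]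
  refine Finset.sum_congr rfl fun x _ => ?_
  simp only [Finsupp.inner_sum]
  refine Finset.sum_congr rfl fun y _ => ?_
  simp only [gram_apply, inner_smul_left, inner_smul_right, RCLike.star_def]
  ring

lemma gram_posSemidef (v : X → F) : (gram 𝕜 v).PosSemidef := by
  refine ⟨isHermitian_gram 𝕜 v, fun c => ?_⟩
  rw [finsuppSum_gram_eq_norm_sq]
  exact RCLike.ofReal_nonneg.2 (sq_nonneg _)

lemma norm_sq_linearCombination_le {C : ℝ} {k : X → H} {g : X → F}
    (h : (C • gram 𝕜 k - gram 𝕜 g).PosSemidef) (c : X →₀ 𝕜) :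
    ‖Finsupp.linearCombination 𝕜 g c‖ ^ 2 ≤ C * ‖Finsupp.linearCombination 𝕜 k c‖ ^ 2 := by
  have hform : (c.sum fun x cx => c.sum fun y cy => star cx * (C • gram 𝕜 k - gram 𝕜 g) x y * cy) =
      C * (c.sum fun x cx => c.sum fun y cy => star cx * gram 𝕜 k x y * cy) -
        c.sum fun x cx => c.sum fun y cy => star cx * gram 𝕜 g x y * cy := by
    simp only [Finsupp.sum, Finset.mul_sum, ← Finset.sum_sub_distrib, Matrix.sub_apply,
      Matrix.smul_apply, RCLike.real_smul_eq_coe_mul]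
    exact Finset.sum_congr rfl fun x _ => Finset.sum_congr rfl fun y _ => by ring
  have hnonneg := h.2 c
  rw [hform, finsuppSum_gram_eq_norm_sq, finsuppSum_gram_eq_norm_sq, ← RCLike.ofReal_mul,
    ← RCLike.ofReal_sub, RCLike.ofReal_nonneg] at hnonneg
  exact sub_nonneg.1 hnonneg

end Gram

lemma posSemidef_map_pow {G : Matrix X X 𝕜} (hG : G.PosSemidef) (n : ℕ) :
    (G.map (· ^ n)).PosSemidef := by
  induction n with
  | zero =>
    have hone : G.map (· ^ 0) = gram 𝕜 fun _ => (1 : 𝕜) := by ext; simp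
    exact hone ▸ gram_posSemidef _
  | succ n ih =>
    have hsucc : G.map (· ^ (n + 1)) = G.map (· ^ n) ⊙ G := by ext; simp [pow_succ]
    exact hsucc ▸ ih.hadamard hG

lemma posSemidef_map_exp_sub_map_pow {G : Matrix X X ℂ} (hG : G.PosSemidef) (k : ℕ) :
    (G.map exp - G.map fun z => z ^ k / k.factorial).PosSemidef := by
  have hterm (n : ℕ) : (G.map fun z => z ^ n / n.factorial).PosSemidef := by
    have hsmul : (G.map fun z => z ^ n / n.factorial) = (n.factorial : ℝ)⁻¹ • G.map (· ^ n) := by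
      ext
      simp [div_eq_inv_mul]
    exact hsmul ▸ (posSemidef_map_pow hG n).smul (by positivity)
  refine posSemidef_of_hasSum
    (F := fun n => if n = k then 0 else G.map fun z => z ^ n / n.factorial) (fun n => ?_)
    fun x y => ?_
  · split_ifs
    exacts [PosSemidef.zero, hterm n]
  · have hexp := NormedSpace.expSeries_div_hasSum_exp (G x y)
    rw [← exp_eq_exp_ℂ] at hexp
    refine (hasSum_ite_sub_hasSum hexp k).congr_fun fun n => ?_
    split_ifs <;> rfl

lemma posSemidef_map_exp {G : Matrix X X ℂ} (hG : G.PosSemidef) : (G.map exp).PosSemidef := by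
  simpa using (posSemidef_map_exp_sub_map_pow hG 0).add (posSemidef_map_pow hG 0)

end PositiveSemidefinite

section Kernel

variable {X : Type*} {Φ : X → X → ℂ}

lemma IsPSDKernel.conj_symm (h : IsPSDKernel Φ) (x y : X) : star (Φ y x) = Φ x y := by
  have hx : (Φ x x).im = 0 := by simpa using (Complex.nonneg_iff.1 (h 1 ![x] ![1])).2.symm
  have hy : (Φ y y).im = 0 := by simpa using (Complex.nonneg_iff.1 (h 1 ![y] ![1])).2.symm
  have him : 0 = (Φ x x).im + (Φ y x).im + ((Φ x y).im + (Φ y y).im) := by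
    simpa using (Complex.nonneg_iff.1 (h 2 ![x, y] ![1, 1])).2
  have hre := (Complex.nonneg_iff.1 (h 2 ![x, y] ![1, I])).2
  simp only [Fin.sum_univ_two, cons_val_zero, map_one, mul_one, cons_val_one, cons_val_fin_one,
    conj_I, mul_neg, neg_mul, one_mul, I_mul_I, neg_neg, add_im, hx, neg_im, I_mul_im, hy,
    zero_add, add_zero] at hre
  apply Complex.ext
  · rw [star_def, conj_re]
    linarith
  · rw [star_def, conj_im]
    linarith

lemma isPSDKernel_iff_posSemidef : IsPSDKernel Φ ↔ (Matrix.of Φ).PosSemidef := by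
  constructor
  · intro h
    refine ⟨Matrix.ext h.conj_symm, fun c => ?_⟩
    have hc := h c.support.card (fun i => (c.support.equivFin.symm i : X))
      (fun i => c (c.support.equivFin.symm i))
    have hsum (f : X → ℂ) : ∑ i, f (c.support.equivFin.symm i) = ∑ x ∈ c.support, f x := by
      rw [c.support.equivFin.symm.sum_comp fun x => f x, Finset.sum_coe_sort]
    have hform : (c.sum fun x cx => c.sum fun y cy => star cx * Matrix.of Φ x y * cy) =
        ∑ y ∈ c.support, ∑ x ∈ c.support, c y * (starRingEnd ℂ) (c x) * Φ x y := by
      rw [Finset.sum_comm]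
      refine Finset.sum_congr rfl fun x _ => Finset.sum_congr rfl fun y _ => ?_
      simp only [of_apply, star_def]
      ring
    simpa only [hform, ← hsum] using hc
  · intro h m x c
    have hc := (h.submatrix x).dotProduct_mulVec_nonneg c
    rw [Finset.sum_comm]
    convert hc using 1
    simp only [dotProduct, Pi.star_apply, star_def, mulVec, submatrix_apply, of_apply,
      Finset.mul_sum]
    exact Finset.sum_congr rfl fun x _ => Finset.sum_congr rfl fun y _ => by ring

lemma isPSDKernel_exp_sub_exp_iff {E F : Type*} [NormedAddCommGroup E]
    [InnerProductSpace ℂ E] [NormedAddCommGroup F] [InnerProductSpace ℂ F] (M : ℝ) (φ : E → F) :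
    IsPSDKernel (fun z w : E => (M : ℂ) ^ 2 * exp ⟪w, z⟫_ℂ - exp ⟪φ w, φ z⟫_ℂ) ↔
      (M ^ 2 • (gram ℂ (id : E → E)).map exp - (gram ℂ φ).map exp).PosSemidef := by
  rw [isPSDKernel_iff_posSemidef, ← posSemidef_transpose_iff]
  congr! 1
  ext z w
  simp

end Kernel

lemma exists_gram_eq_of_posSemidef.{u} {X : Type u} {K : Matrix X X ℂ} (hK : K.PosSemidef) :
    ∃ (H : Type u) (_ : NormedAddCommGroup H) (_ : InnerProductSpace ℂ H) (_ : CompleteSpace H)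
      (k : X → H), gram ℂ k = K := by
  let K' : Matrix X X (ℂ →L[ℂ] ℂ) := K.map fun a => a • 1
  have hK' : K'.PosSemidef := by
    apply (RKHS.posSemidef_tfae.out 2 0).mp
    refine ⟨hK.1.map _ fun a => ?_, fun v => ?_⟩
    · ext
      simp
    · have hform (x x' : X) (w w' : ℂ) : ⟪K' x' x w, w'⟫_ℂ = star w * K x x' * w' := by
        rw [← hK.1.apply x x']
        simp [K', mul_comm]
      simpa only [hform] using (RCLike.nonneg_iff.1 (hK.2 v)).1
  have : Fact K'.PosSemidef := ⟨hK'⟩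
  refine ⟨RKHS.OfKernel K', inferInstance, inferInstance, inferInstance,
    fun x => RKHS.kerFun _ x 1, ?_⟩
  ext x y
  rw [gram_apply, ← RKHS.kernel_inner, RKHS.OfKernel.kernel_ofKernel]
  simpa [K'] using hK.1.apply x y

lemma exists_inner_eq_of_norm_le {𝕜 W V : Type*} [RCLike 𝕜] [AddCommGroup W] [Module 𝕜 W]
    [NormedAddCommGroup V] [InnerProductSpace 𝕜 V] [CompleteSpace V]
    {f : W →ₗ[𝕜] 𝕜} {e : W →ₗ[𝕜] V} {C : ℝ} (h : ∀ x, ‖f x‖ ≤ C * ‖e x‖) :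
    ∃ u : V, ∀ x, f x = ⟪u, e x⟫_𝕜 := by
  obtain ⟨g, hg, -⟩ := exists_extension_norm_eq (LinearMap.range e) (f.compLeftInverse e)
  refine ⟨(InnerProductSpace.toDual 𝕜 V).symm g, fun x => ?_⟩
  rw [InnerProductSpace.toDual_symm_apply,
    ← LinearMap.compLeftInverse_apply_of_bdd f e ⟨C, h⟩ x (e x) rfl]
  exact (hg ⟨e x, x, rfl⟩).symm

section Domination

variable {𝕜 X F H : Type*} [RCLike 𝕜] [NormedAddCommGroup F] [InnerProductSpace 𝕜 F]
  [NormedAddCommGroup H] [InnerProductSpace 𝕜 H] [CompleteSpace H]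

lemma mem_range_adjoint_of_norm_inner_le [CompleteSpace F] {T : F →L[𝕜] H} {y : F} {C : ℝ}
    (h : ∀ x, ‖⟪y, x⟫_𝕜‖ ≤ C * ‖T x‖) : y ∈ Set.range (adjoint T) := by
  obtain ⟨u, hu⟩ := exists_inner_eq_of_norm_le (f := (innerSL 𝕜 y).toLinearMap)
    (e := T.toLinearMap) h
  exact ⟨u, ext_inner_right 𝕜 fun x => (adjoint_inner_left T x u).trans (hu x).symm⟩

lemma exists_inner_eq_of_posSemidef {C : ℝ} {k : X → H} {g : X → F}
    (h : (C • gram 𝕜 k - gram 𝕜 g).PosSemidef) (v : F) :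
    ∃ u : H, ∀ x, ⟪v, g x⟫_𝕜 = ⟪u, k x⟫_𝕜 := by
  have hbound (c : X →₀ 𝕜) : ‖⟪v, Finsupp.linearCombination 𝕜 g c⟫_𝕜‖ ≤
      (‖v‖ * √C) * ‖Finsupp.linearCombination 𝕜 k c‖ := by
    grw [norm_inner_le_norm, mul_assoc,
      ← Real.sqrt_sq (norm_nonneg (Finsupp.linearCombination 𝕜 k c)),
      ← Real.sqrt_mul' C (sq_nonneg _), ← norm_sq_linearCombination_le h c,
      Real.sqrt_sq (norm_nonneg _)]
  obtain ⟨u, hu⟩ := exists_inner_eq_of_norm_le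
    (f := (innerSL 𝕜 v).toLinearMap ∘ₗ Finsupp.linearCombination 𝕜 g)
    (e := Finsupp.linearCombination 𝕜 k) hbound
  exact ⟨u, fun x => by simpa using hu (Finsupp.single x 1)⟩

end Domination

section Holomorphic

variable {H F : Type*} [NormedAddCommGroup H] [InnerProductSpace ℂ H]
  [NormedAddCommGroup F] [InnerProductSpace ℂ F]

lemma differentiable_inner_of_mem_closure {k : ℂ → H} (hk : Continuous fun z => ‖k z‖) {s : Set H}
    (hs : ∀ u ∈ s, Differentiable ℂ fun z => ⟪u, k z⟫_ℂ) {u : H} (hu : u ∈ closure s) :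
    Differentiable ℂ fun z => ⟪u, k z⟫_ℂ := by
  obtain ⟨u', hu's, hu'⟩ := mem_closure_iff_seq_limit.1 hu
  have hlim : TendstoLocallyUniformlyOn (fun n z => ⟪u' n, k z⟫_ℂ) (fun z => ⟪u, k z⟫_ℂ)
      Filter.atTop Set.univ := by
    refine Metric.tendstoLocallyUniformlyOn_iff.2 fun ε hε z _ => ?_
    have hnorm : Filter.Tendsto (fun n => ‖u - u' n‖ * (‖k z‖ + 1)) Filter.atTop (nhds 0) := by
      simpa [norm_sub_rev] using
        (tendsto_iff_norm_sub_tendsto_zero.1 hu').mul_const (‖k z‖ + 1)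
    refine ⟨{w | ‖k w‖ < ‖k z‖ + 1}, ?_, ?_⟩
    · rw [nhdsWithin_univ]
      exact hk.continuousAt.eventually_lt_const (lt_add_one _)
    · filter_upwards [hnorm.eventually_lt_const hε] with n hn w hw
      rw [dist_eq_norm, ← inner_sub_left]
      grw [norm_inner_le_norm, le_of_lt hw, hn]
  exact differentiableOn_univ.1 (hlim.differentiableOn
    (.of_forall fun n => (hs _ (hu's n)).differentiableOn) isOpen_univ)

lemma differentiable_inner_of_gram [CompleteSpace H] {k : ℂ → H} (hk : Continuous fun z => ‖k z‖)
    (hgram : ∀ w, Differentiable ℂ fun z => ⟪k w, k z⟫_ℂ) (u : H) :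
    Differentiable ℂ fun z => ⟪u, k z⟫_ℂ := by
  set S := (Submodule.span ℂ (Set.range k)).topologicalClosure
  have hS (z : ℂ) : k z ∈ S := Submodule.le_topologicalClosure _ (Submodule.subset_span ⟨z, rfl⟩)
  have hproj : (fun z => ⟪u, k z⟫_ℂ) = fun z => ⟪S.starProjection u, k z⟫_ℂ := by
    ext z
    rw [S.inner_starProjection_left_eq_right, Submodule.starProjection_eq_self_iff.2 (hS z)]
  rw [hproj]
  refine differentiable_inner_of_mem_closure (s := (Submodule.span ℂ (Set.range k) : Set H)) hk
    (fun u hu => ?_) (S.starProjection_apply_mem u)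
  induction hu using Submodule.span_induction with
  | mem x hx =>
    obtain ⟨w, rfl⟩ := hx
    exact hgram w
  | zero => simp
  | add x y _ _ hx hy => simpa only [inner_add_left] using hx.fun_add hy
  | smul a x _ hx => simpa only [inner_smul_left] using hx.const_mul _

lemma differentiable_inner_of_posSemidef {K : Matrix ℂ ℂ ℂ} (hK : K.PosSemidef)
    (hdiff : ∀ w, Differentiable ℂ (K w)) (hdiag : Continuous fun z => K z z) {g : ℂ → F} {C : ℝ}
    (h : (C • K - gram ℂ g).PosSemidef) (v : F) : Differentiable ℂ fun z => ⟪v, g z⟫_ℂ := by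
  obtain ⟨H, _, _, _, k, rfl⟩ := exists_gram_eq_of_posSemidef hK
  obtain ⟨u, hu⟩ := exists_inner_eq_of_posSemidef h v
  simp_rw [hu]
  refine differentiable_inner_of_gram ?_ hdiff u
  simpa [inner_self_eq_norm_sq_to_K] using hdiag.norm.sqrt

end Holomorphic

section Affine

lemma eq_add_smul_of_norm_le {F : Type*} [NormedAddCommGroup F] [NormedSpace ℂ F]
    [CompleteSpace F] {h : ℂ → F} (hd : Differentiable ℂ h) {C : ℝ}
    (hC : ∀ z, ‖h z‖ ≤ C * (1 + ‖z‖)) (z : ℂ) :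
    h z = h 0 + z • (h 1 - h 0) := by
  have hC0 : 0 ≤ C := by simpa using (norm_nonneg _).trans (hC 0)
  have hderiv (c : ℂ) : ‖deriv h c‖ ≤ 2 * C := by
    have hcauchy : ‖deriv h c‖ ≤ C * (2 * (1 + ‖c‖)) / (1 + ‖c‖) := by
      refine norm_deriv_le_of_forall_mem_sphere_norm_le (by positivity) hd.diffContOnCl
        fun w hw => (hC w).trans ?_
      have hwc := norm_sub_norm_le w c
      rw [mem_sphere_iff_norm.1 hw] at hwc
      gcongr
      linarith
    convert hcauchy using 1
    field_simp
  obtain ⟨a, ha⟩ := hd.deriv.exists_const_forall_eq_of_bounded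
    (isBounded_iff_forall_norm_le.2 ⟨_, Set.forall_mem_range.2 hderiv⟩)
  have hlin : ∀ z w, h z - z • a = h w - w • a := by
    refine is_const_of_deriv_eq_zero (𝕜 := ℂ) (by fun_prop) fun z => ?_
    simpa [ha] using ((hd z).hasDerivAt.fun_sub ((hasDerivAt_id z).smul_const a)).deriv
  have h0 := hlin z 0
  have h1 := hlin 1 0
  simp only [zero_smul, one_smul, sub_zero] at h0 h1
  rw [eq_add_of_sub_eq h0, ← h1, sub_sub_cancel]

lemma exists_linearMap_of_map_lineMap {R V W : Type*} [Ring R] [Invertible (2 : R)]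
    [AddCommGroup V] [AddCommGroup W] [Module R V] [Module R W] {f : V → W}
    (h : ∀ (x y : V) (t : R), f (AffineMap.lineMap x y t) = AffineMap.lineMap (f x) (f y) t) :
    ∃ L : V →ₗ[R] W, ∀ z, f z = L z + f 0 := by
  have hsmul (t : R) (z : V) : f (t • z) = t • (f z - f 0) + f 0 := by
    simpa [AffineMap.lineMap_apply] using h 0 z t
  have hadd (x y : V) : f (x + y) - f 0 = f x - f 0 + (f y - f 0) := by
    have hmid := h ((2 : R) • x) ((2 : R) • y) (⅟2)
    change f (midpoint R _ _) = midpoint R _ _ at hmid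
    rw [midpoint_eq_smul_add, midpoint_eq_smul_add, ← smul_add, invOf_smul_smul, hsmul,
      hsmul] at hmid
    rw [hmid, add_add_add_comm, ← smul_add, ← two_smul R (f 0), ← smul_add, invOf_smul_smul,
      add_sub_cancel_right]
  exact ⟨{ toFun := fun z => f z - f 0
           map_add' := hadd
           map_smul' := fun t z => by simp [hsmul] },
    fun z => (sub_add_cancel _ _).symm⟩

variable {𝕜 V W : Type*} [RCLike 𝕜] [SeminormedAddCommGroup V] [NormedSpace 𝕜 V]
  [NormedAddCommGroup W] [InnerProductSpace 𝕜 W] {A : V →ₗ[𝕜] W} {b : W} {C : ℝ}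

lemma norm_inner_sq_le_of_norm_add_sq_le (h : ∀ z, ‖A z + b‖ ^ 2 ≤ ‖z‖ ^ 2 + C) (z : V) :
    ‖⟪A z, b⟫_𝕜‖ ^ 2 ≤ (‖z‖ ^ 2 - ‖A z‖ ^ 2) * (C - ‖b‖ ^ 2) := by
  obtain ⟨a, ha, hab⟩ := RCLike.exists_norm_eq_mul_self ⟪A z, b⟫_𝕜
  have hquad (t : ℝ) : 0 ≤
      (‖z‖ ^ 2 - ‖A z‖ ^ 2) * (t * t) + -2 * ‖⟪A z, b⟫_𝕜‖ * t + (C - ‖b‖ ^ 2) := by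
    have hinner : ⟪A (((t : 𝕜) * star a) • z), b⟫_𝕜 = ((t * ‖⟪A z, b⟫_𝕜‖ : ℝ) : 𝕜) := by
      rw [map_smul, inner_smul_left, RCLike.ofReal_mul, hab]
      simp [mul_assoc]
    have ht := h (((t : 𝕜) * star a) • z)
    rw [norm_add_sq (𝕜 := 𝕜), hinner, RCLike.ofReal_re, map_smul, norm_smul, norm_smul, norm_mul,
      norm_star, ha, RCLike.norm_ofReal, mul_one, mul_pow, mul_pow, sq_abs] at ht
    linarith
  have hdiscrim := discrim_le_zero hquad
  rw [discrim] at hdiscrim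
  linarith

lemma norm_map_le_of_norm_add_sq_le (h : ∀ z, ‖A z + b‖ ^ 2 ≤ ‖z‖ ^ 2 + C) (z : V) :
    ‖A z‖ ≤ ‖z‖ := by
  have hb : ‖b‖ ^ 2 ≤ C := by simpa using h 0
  have hz := norm_inner_sq_le_of_norm_add_sq_le (C := C + 1) (fun z => (h z).trans (by linarith)) z
  have hnonneg := nonneg_of_mul_nonneg_left ((sq_nonneg _).trans hz) (by linarith)
  exact le_of_sq_le_sq (sub_nonneg.1 hnonneg) (norm_nonneg z)

end Affine

section SquareRoot

variable {E F : Type*} [NormedAddCommGroup E] [InnerProductSpace ℂ E] [CompleteSpace E]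
  [NormedAddCommGroup F] [InnerProductSpace ℂ F]

lemma exists_isPosSqrtOf {T : E →L[ℂ] E} (hT : 0 ≤ T) : ∃ S, IsPosSqrtOf S T := by
  have hpos := (nonneg_iff_isPositive _).1 (CFC.sqrt_nonneg T)
  exact ⟨CFC.sqrt T, ⟨hpos.isSymmetric, hpos.inner_nonneg_left⟩, CFC.sqrt_mul_sqrt_self T hT⟩

lemma IsPosSqrtOf.adjoint_eq {S T : E →L[ℂ] E} (hS : IsPosSqrtOf S T) : adjoint S = S :=
  ((eq_adjoint_iff S S).2 hS.1.1).symm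

variable [CompleteSpace F] {A : E →L[ℂ] F} {S : E →L[ℂ] E}

lemma one_sub_adjoint_comp_self_nonneg (hA : ‖A‖ ≤ 1) : 0 ≤ 1 - adjoint A ∘L A := by
  rw [sub_nonneg, ← CStarAlgebra.norm_le_one_iff_of_nonneg _
    ((nonneg_iff_isPositive _).2 (isPositive_adjoint_comp_self A)), norm_adjoint_comp_self]
  exact mul_le_one₀ hA (norm_nonneg A) hA

lemma IsPosSqrtOf.inner_add_inner (hS : IsPosSqrtOf S (1 - adjoint A ∘L A)) (z w : E) :
    ⟪A z, A w⟫_ℂ + ⟪S z, S w⟫_ℂ = ⟪z, w⟫_ℂ := by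
  have hSS : S (S w) = w - adjoint A (A w) := DFunLike.congr_fun hS.2 w
  rw [hS.1.1, hSS, inner_sub_right, adjoint_inner_right, add_sub_cancel]

lemma IsPosSqrtOf.norm_sq_add_norm_sq (hS : IsPosSqrtOf S (1 - adjoint A ∘L A)) (z : E) :
    ‖A z‖ ^ 2 + ‖S z‖ ^ 2 = ‖z‖ ^ 2 := by
  have h := hS.inner_add_inner z z
  simp only [inner_self_eq_norm_sq_to_K] at h
  exact_mod_cast h

lemma IsPosSqrtOf.adjoint_apply_mem_range (hS : IsPosSqrtOf S (1 - adjoint A ∘L A)) {b : F} {C : ℝ}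
    (h : ∀ z, ‖A z + b‖ ^ 2 ≤ ‖z‖ ^ 2 + C) : adjoint A b ∈ Set.range S := by
  have hbound (z : E) : ‖⟪adjoint A b, z⟫_ℂ‖ ≤ √(C - ‖b‖ ^ 2) * ‖S z‖ := by
    have hz := norm_inner_sq_le_of_norm_add_sq_le (A := A.toLinearMap) h z
    rw [coe_coe, ← hS.norm_sq_add_norm_sq z, add_sub_cancel_left] at hz
    rw [adjoint_inner_left, norm_inner_symm, mul_comm, ← Real.sqrt_sq (norm_nonneg (S z)),
      ← Real.sqrt_mul (sq_nonneg _)]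
    exact Real.le_sqrt_of_sq_le hz
  exact hS.adjoint_eq ▸ mem_range_adjoint_of_norm_inner_le hbound

lemma IsPosSqrtOf.inner_add_add_inner_sub_sub (hS : IsPosSqrtOf S (1 - adjoint A ∘L A)) {b : F}
    {u : E} (hu : S u = adjoint A b) (z w : E) :
    ⟪A z + b, A w + b⟫_ℂ + ⟪S z - u, S w - u⟫_ℂ = (‖b‖ ^ 2 + ‖u‖ ^ 2 : ℝ) + ⟪z, w⟫_ℂ := by
  have hleft : ⟪A z, b⟫_ℂ = ⟪S z, u⟫_ℂ := by rw [← adjoint_inner_right, ← hu, hS.1.1]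
  have hright : ⟪b, A w⟫_ℂ = ⟪u, S w⟫_ℂ := by rw [← adjoint_inner_left, ← hu, hS.1.1]
  have hb : ⟪b, b⟫_ℂ = ‖b‖ ^ 2 := inner_self_eq_norm_sq_to_K b
  have hnorm : ⟪u, u⟫_ℂ = ‖u‖ ^ 2 := inner_self_eq_norm_sq_to_K u
  rw [inner_add_left, inner_add_right, inner_add_right, inner_sub_left, inner_sub_right,
    inner_sub_right, hleft, hright, hb, hnorm,
    ← hS.inner_add_inner z w]
  push_cast
  ring

lemma IsPosSqrtOf.posSemidef_exp_sub_exp (hS : IsPosSqrtOf S (1 - adjoint A ∘L A)) {b : F} {u : E}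
    (hu : S u = adjoint A b) :
    (Real.exp (‖b‖ ^ 2 + ‖u‖ ^ 2) • (gram ℂ (id : E → E)).map exp -
      (gram ℂ fun z => A z + b).map exp).PosSemidef := by
  have hfactor : Real.exp (‖b‖ ^ 2 + ‖u‖ ^ 2) • (gram ℂ (id : E → E)).map exp -
      (gram ℂ fun z => A z + b).map exp = (gram ℂ fun z => A z + b).map exp ⊙
        ((gram ℂ fun z => S z - u).map exp - (gram ℂ fun z => S z - u).map (· ^ 0)) := by
    ext z w
    simp only [Matrix.sub_apply, Matrix.smul_apply, map_apply, hadamard_apply, gram_apply, id,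
      pow_zero, real_smul, ofReal_exp, ← Complex.exp_add, mul_sub, mul_one,
      hS.inner_add_add_inner_sub_sub hu]
  rw [hfactor]
  refine (posSemidef_map_exp (gram_posSemidef _)).hadamard ?_
  simpa using posSemidef_map_exp_sub_map_pow (gram_posSemidef (𝕜 := ℂ) fun z => S z - u) 0

end SquareRoot

section ExpDomination

variable {E F : Type*} [NormedAddCommGroup E] [InnerProductSpace ℂ E]
  [NormedAddCommGroup F] [InnerProductSpace ℂ F] {φ : E → F} {C : ℝ}

lemma norm_sq_le_of_posSemidef_exp
    (h : (C • (gram ℂ (id : E → E)).map exp - (gram ℂ φ).map exp).PosSemidef) (z : E) :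
    ‖φ z‖ ^ 2 ≤ ‖z‖ ^ 2 + Real.log C := by
  have hz : Real.exp (‖φ z‖ ^ 2) ≤ Real.exp (‖z‖ ^ 2) * C := by
    have hdiag := h.diag_nonneg (i := z)
    simp only [Matrix.sub_apply, Matrix.smul_apply, map_apply, gram_apply, id, real_smul,
      sub_nonneg, inner_self_eq_norm_sq_to_K, coe_algebraMap] at hdiag
    rw [mul_comm]
    exact_mod_cast hdiag
  have hC : 0 < C := (mul_pos_iff_of_pos_left (Real.exp_pos _)).1 ((Real.exp_pos _).trans_le hz)
  rwa [← Real.exp_le_exp, Real.exp_add, Real.exp_log hC]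

lemma norm_inner_map_lineMap_le (h : ∀ z, ‖φ z‖ ^ 2 ≤ ‖z‖ ^ 2 + C) (x y : E) (v : F) (t : ℂ) :
    ‖⟪v, φ (AffineMap.lineMap x y t)⟫_ℂ‖ ≤ ‖v‖ * (‖x‖ + ‖y - x‖ + √C) * (1 + ‖t‖) := by
  have hC : 0 ≤ C := by simpa using (sq_nonneg _).trans (h 0)
  have hφ (z : E) : ‖φ z‖ ≤ ‖z‖ + √C := by
    refine le_of_sq_le_sq ((h z).trans ?_) (by positivity)
    rw [add_sq, Real.sq_sqrt hC]
    have : 0 ≤ 2 * ‖z‖ * √C := by positivity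
    linarith
  have hline : ‖AffineMap.lineMap x y t‖ ≤ ‖x‖ + ‖t‖ * ‖y - x‖ := by
    rw [AffineMap.lineMap_apply_module', add_comm, ← norm_smul]
    exact norm_add_le _ _
  grw [norm_inner_le_norm, hφ, hline, mul_assoc]
  gcongr
  have : 0 ≤ ‖t‖ * (‖x‖ + √C) + ‖y - x‖ := by positivity
  linarith

lemma differentiable_inner_map_lineMap_of_posSemidef_exp
    (h : (C • (gram ℂ (id : E → E)).map exp - (gram ℂ φ).map exp).PosSemidef) (x y : E) (v : F) :
    Differentiable ℂ fun t : ℂ => ⟪v, φ (AffineMap.lineMap x y t)⟫_ℂ := by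
  let l : ℂ → E := AffineMap.lineMap x y
  refine differentiable_inner_of_posSemidef (K := (gram ℂ l).map exp) (g := φ ∘ l) (C := C)
    (posSemidef_map_exp (gram_posSemidef l)) (fun w => ?_) ?_ ?_ v
  · change Differentiable ℂ fun t => exp ⟪l w, l t⟫_ℂ
    simp only [l, AffineMap.lineMap_apply_module', inner_add_right, inner_smul_right]
    fun_prop
  · simp only [map_apply, gram_apply, l, AffineMap.lineMap_apply_module']
    fun_prop
  · have hlin := posSemidef_map_exp_sub_map_pow (gram_posSemidef (𝕜 := ℂ) φ) 1
    convert (h.add hlin).submatrix l using 1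
    ext s t
    simp [l]

lemma map_lineMap_of_posSemidef_exp
    (h : (C • (gram ℂ (id : E → E)).map exp - (gram ℂ φ).map exp).PosSemidef) (x y : E) (t : ℂ) :
    φ (AffineMap.lineMap x y t) = AffineMap.lineMap (φ x) (φ y) t := by
  refine ext_inner_left ℂ fun v => ?_
  have haff := eq_add_smul_of_norm_le (differentiable_inner_map_lineMap_of_posSemidef_exp h x y v)
    (norm_inner_map_lineMap_le (norm_sq_le_of_posSemidef_exp h) x y v) t
  rw [haff, AffineMap.lineMap_apply_zero, AffineMap.lineMap_apply_one,
    AffineMap.lineMap_apply_module', inner_add_right, inner_smul_right, inner_sub_right, add_comm,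
    smul_eq_mul]

lemma exists_contraction_of_posSemidef_exp
    (h : (C • (gram ℂ (id : E → E)).map exp - (gram ℂ φ).map exp).PosSemidef) :
    ∃ A : E →L[ℂ] F, ‖A‖ ≤ 1 ∧ ∀ z, φ z = A z + φ 0 := by
  obtain ⟨L, hL⟩ := exists_linearMap_of_map_lineMap (map_lineMap_of_posSemidef_exp h)
  have hbound (z : E) : ‖L z‖ ≤ 1 * ‖z‖ := by
    rw [one_mul]
    exact norm_map_le_of_norm_add_sq_le (fun z => hL z ▸ norm_sq_le_of_posSemidef_exp h z) z
  exact ⟨L.mkContinuous 1 hbound, L.mkContinuous_norm_le zero_le_one hbound, hL⟩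

end ExpDomination

theorem statement0_general {E F : Type*} [NormedAddCommGroup E] [InnerProductSpace ℂ E]
    [CompleteSpace E] [NormedAddCommGroup F] [InnerProductSpace ℂ F] [CompleteSpace F]
    (φ : E → F) :
    (∃ M : ℝ, 0 < M ∧ IsPSDKernel (fun z w : E =>
        (M : ℂ) ^ 2 * exp ⟪w, z⟫_ℂ - exp ⟪φ w, φ z⟫_ℂ)) ↔
    ∃ (A : E →L[ℂ] F) (b : F), ‖A‖ ≤ 1 ∧ (∀ z : E, φ z = A z + b) ∧
      ∃ S : E →L[ℂ] E, IsPosSqrtOf S (1 - (adjoint A) ∘L A) ∧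
        adjoint A b ∈ Set.range ⇑S := by
  simp_rw [isPSDKernel_exp_sub_exp_iff]
  constructor
  · rintro ⟨M, -, h⟩
    obtain ⟨A, hA, hφ⟩ := exists_contraction_of_posSemidef_exp h
    obtain ⟨S, hS⟩ := exists_isPosSqrtOf (one_sub_adjoint_comp_self_nonneg hA)
    exact ⟨A, φ 0, hA, hφ, S, hS,
      hS.adjoint_apply_mem_range fun z => hφ z ▸ norm_sq_le_of_posSemidef_exp h z⟩
  · rintro ⟨A, b, -, hφ, S, hS, u, hu⟩
    refine ⟨√(Real.exp (‖b‖ ^ 2 + ‖u‖ ^ 2)), Real.sqrt_pos.2 (Real.exp_pos _), ?_⟩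
    rw [Real.sq_sqrt (Real.exp_pos _).le, funext hφ]
    exact hS.posSemidef_exp_sub_exp hu

/-- For `φ : E → E`, there is `M > 0` making
`Φ_M(z,w) = M² exp⟨z,w⟩ − exp⟨φ z, φ w⟩` a positive semi-definite kernel (i.e. `C_φ` is bounded
on the Segal–Bargmann space with norm at most `M`) iff `φ z = A z + b` with `‖A‖ ≤ 1` and
`A* b` in the range of `(I − A*A)^{1/2}`.  (The paper's inner product `⟨z,w⟩`, linear in the
first slot, is `⟪w, z⟫_ℂ` in Mathlib's convention.) -/
theorem statement0 {E : Type*} [NormedAddCommGroup E] [InnerProductSpace ℂ E]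
    [CompleteSpace E] (φ : E → E) :
    (∃ M : ℝ, 0 < M ∧ IsPSDKernel (fun z w : E =>
        (M : ℂ) ^ 2 * Complex.exp ⟪w, z⟫_ℂ - Complex.exp ⟪φ w, φ z⟫_ℂ)) ↔
    ∃ (A : E →L[ℂ] E) (b : E), ‖A‖ ≤ 1 ∧ (∀ z : E, φ z = A z + b) ∧
      ∃ S : E →L[ℂ] E, IsPosSqrtOf S (1 - (adjoint A) ∘L A) ∧
        adjoint A b ∈ Set.range ⇑S :=
  statement0_general φ
end

section
/- Let E be a complex Hilbert space, u ∈ E, T a bounded self-adjoint operator on E, and M a real number. Define F(z,w) = ⟨Tz,w⟩ − ⟨z,u⟩ − ⟨u,w⟩ + M² for z, w ∈ E. Then the following are equivalent: (a) F is a positive semi-definite kernel on E; (b) for every z ∈ E, F(z,z) = ⟨Tz,z⟩ − 2·Re⟨z,u⟩ + M² is a nonnegative real number; (c) T is a positive operator and there exists û ∈ E with u = T^{1/2} û and ‖û‖ ≤ |M|. -/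
open scoped InnerProductSpace ComplexOrder
open ContinuousLinearMap

/-!
If `T = S²` with `S` positive and `u = S u'`, then
`F(z, w) = ⟪S w - u', S z - u'⟫ + (M² - ‖u'‖²)` is a Gram kernel plus a nonnegative constant.

Conversely, let `F(z, z) ≥ 0` for all `z`. Adding `F(z, z)` and `F(-z, -z)` cancels the linear
terms, so `⟪z, T z⟫ + M² ≥ 0`; a quadratic form bounded below is nonnegative, so `T` is positive and
has a positive square root `S`. The hypothesis now reads `2 re ⟪u, z⟫ ≤ ‖S z‖² + M²`, which a
discriminant argument sharpens to `|⟪u, z⟫| ≤ |M| ‖S z‖`. Hence `S z ↦ ⟪u, z⟫` is a well-defined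
functional of norm at most `|M|`, and a vector `u'` representing it satisfies `S u' = u`.
-/

namespace IsPSDKernel

variable {X : Type*} {Φ Ψ : X → X → ℂ}

theorem diag_nonneg (hΦ : IsPSDKernel Φ) (x : X) : 0 ≤ Φ x x := by
  simpa using hΦ 1 (fun _ => x) (fun _ => 1)

theorem add (hΦ : IsPSDKernel Φ) (hΨ : IsPSDKernel Ψ) :
    IsPSDKernel fun x y => Φ x y + Ψ x y := by
  intro m x c
  simpa only [mul_add, Finset.sum_add_distrib] using add_nonneg (hΦ m x c) (hΨ m x c)

theorem const {a : ℂ} (ha : 0 ≤ a) : IsPSDKernel fun _ _ : X => a := by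
  intro m _ c
  have sum_eq : ∑ j, ∑ l, c j * (starRingEnd ℂ) (c l) * a =
      (∑ j, c j) * star (∑ j, c j) * a := by
    simp only [← Complex.star_def, star_sum, Finset.sum_mul_sum]
    simp only [Finset.sum_mul]
  exact sum_eq ▸ mul_nonneg (mul_star_self_nonneg _) ha

theorem inner {E : Type*} [SeminormedAddCommGroup E] [InnerProductSpace ℂ E] (f : X → E) :
    IsPSDKernel fun x y => ⟪f y, f x⟫_ℂ := by
  intro m x c
  have sum_eq : ∑ j, ∑ l, c j * (starRingEnd ℂ) (c l) * ⟪f (x j), f (x l)⟫_ℂ =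
      ⟪∑ j, (starRingEnd ℂ) (c j) • f (x j), ∑ j, (starRingEnd ℂ) (c j) • f (x j)⟫_ℂ := by
    simp only [sum_inner, inner_sum, inner_smul_left, inner_smul_right, Complex.conj_conj,
      Finset.mul_sum, mul_assoc]
    rw [Finset.sum_comm]
    simp only [mul_left_comm]
  rw [sum_eq, inner_self_eq_norm_sq_to_K]
  exact pow_nonneg (RCLike.ofReal_nonneg.2 (norm_nonneg _)) 2

end IsPSDKernel

theorem nonneg_of_forall_pos_smul_add_nonneg {V : Type*} [AddCommMonoid V] [Module ℝ V]
    [PartialOrder V] [PosSMulMono ℝ V] [TopologicalSpace V] [ContinuousAdd V] [ContinuousSMul ℝ V]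
    [ClosedIciTopology V] {a c : V} (h : ∀ t : ℝ, 0 < t → 0 ≤ t • a + c) : 0 ≤ a := by
  have tendsto_a : Filter.Tendsto (fun t : ℝ => a + t⁻¹ • c) Filter.atTop (nhds a) := by
    simpa using ((tendsto_inv_atTop_zero (𝕜 := ℝ)).smul_const c).const_add a
  refine ge_of_tendsto tendsto_a ((Filter.eventually_gt_atTop 0).mono fun t ht => ?_)
  simpa [smul_smul, inv_mul_cancel₀ ht.ne'] using smul_nonneg (inv_pos.2 ht).le (h t ht)

theorem norm_le_abs_mul_of_forall_two_mul_re_le {𝕜 V : Type*} [RCLike 𝕜] [AddCommGroup V]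
    [Module 𝕜 V] (f : V →ₗ[𝕜] 𝕜) (p : Seminorm 𝕜 V) {M : ℝ}
    (h : ∀ z, 2 * RCLike.re (f z) ≤ p z ^ 2 + M ^ 2) (z : V) : ‖f z‖ ≤ |M| * p z := by
  obtain ⟨c, norm_c, hc⟩ := RCLike.exists_norm_eq_mul_self (f z)
  have quadratic_nonneg (t : ℝ) : 0 ≤ p z ^ 2 * (t * t) + -2 * ‖f z‖ * t + M ^ 2 := by
    have re_eq : RCLike.re (f (((t : 𝕜) * c) • z)) = t * ‖f z‖ := by
      rw [map_smul, smul_eq_mul, mul_assoc, ← hc, ← RCLike.ofReal_mul, RCLike.ofReal_re]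
    have seminorm_sq : p (((t : 𝕜) * c) • z) ^ 2 = t ^ 2 * p z ^ 2 := by
      rw [map_smul_eq_mul, norm_mul, norm_c, mul_one, RCLike.norm_ofReal, mul_pow, sq_abs]
    have rotated := h (((t : 𝕜) * c) • z)
    rw [re_eq, seminorm_sq] at rotated
    linarith
  have discrim_nonpos := discrim_le_zero quadratic_nonneg
  rw [discrim] at discrim_nonpos
  refine le_of_sq_le_sq ?_ (by positivity)
  rw [mul_pow, sq_abs]
  linarith

section Factorization

variable {𝕜 V F : Type*} [RCLike 𝕜] [AddCommGroup V] [Module 𝕜 V]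

theorem exists_strongDual_comp_eq_of_norm_le [SeminormedAddCommGroup F] [NormedSpace 𝕜 F]
    (f : V →ₗ[𝕜] 𝕜) (S : V →ₗ[𝕜] F) {C : ℝ} (hC : 0 ≤ C) (h : ∀ z, ‖f z‖ ≤ C * ‖S z‖) :
    ∃ ψ : StrongDual 𝕜 F, (∀ z, ψ (S z) = f z) ∧ ‖ψ‖ ≤ C := by
  have f_vanishes_on_ker : f ∈ (LinearMap.ker S).dualAnnihilator := by
    rw [Submodule.mem_dualAnnihilator]
    intro z hz
    simpa [LinearMap.mem_ker.1 hz] using h z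
  obtain ⟨g, rfl⟩ := LinearMap.range_dualMap_eq_dualAnnihilator_ker S ▸ f_vanishes_on_ker
  let φ : StrongDual 𝕜 (LinearMap.range S) :=
    (g.domRestrict (LinearMap.range S)).mkContinuous C (by rintro ⟨_, z, rfl⟩; exact h z)
  obtain ⟨ψ, ψ_extends, norm_ψ⟩ := exists_extension_norm_eq _ φ
  exact ⟨ψ, fun z => ψ_extends ⟨S z, z, rfl⟩,
    norm_ψ.trans_le (LinearMap.mkContinuous_norm_le _ hC _)⟩

theorem exists_inner_comp_eq_of_norm_le [NormedAddCommGroup F] [InnerProductSpace 𝕜 F]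
    [CompleteSpace F] (f : V →ₗ[𝕜] 𝕜) (S : V →ₗ[𝕜] F) {C : ℝ} (hC : 0 ≤ C)
    (h : ∀ z, ‖f z‖ ≤ C * ‖S z‖) : ∃ y : F, (∀ z, ⟪y, S z⟫_𝕜 = f z) ∧ ‖y‖ ≤ C := by
  obtain ⟨ψ, hψ, norm_ψ⟩ := exists_strongDual_comp_eq_of_norm_le f S hC h
  exact ⟨(InnerProductSpace.toDual 𝕜 F).symm ψ,
    fun z => by rw [InnerProductSpace.toDual_symm_apply, hψ],
    by rwa [LinearIsometryEquiv.norm_map]⟩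

end Factorization

section Operators

variable {E : Type*} [NormedAddCommGroup E] [InnerProductSpace ℂ E]

theorem isPositive_of_forall_nonneg_inner_add {T : E →ₗ[ℂ] E} {c : ℂ}
    (h : ∀ z, 0 ≤ ⟪z, T z⟫_ℂ + c) : T.IsPositive := by
  have inner_nonneg (z : E) : 0 ≤ ⟪z, T z⟫_ℂ := by
    refine nonneg_of_forall_pos_smul_add_nonneg (c := c) fun t ht => ?_
    have rescaled := h ((√t : ℂ) • z)
    rwa [map_smul, inner_smul_left, inner_smul_right, Complex.conj_ofReal, ← mul_assoc,
      ← Complex.ofReal_mul, Real.mul_self_sqrt ht.le] at rescaled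
  refine T.isPositive_iff_complex.2 fun z => ?_
  have inner_nonneg_left : 0 ≤ ⟪T z, z⟫_ℂ := by
    rw [← inner_conj_symm]
    exact star_nonneg_iff.2 (inner_nonneg z)
  obtain ⟨re_nonneg, im_eq⟩ := Complex.nonneg_iff.1 inner_nonneg_left
  exact ⟨Complex.ext rfl im_eq, re_nonneg⟩

variable {S T : E →L[ℂ] E}

theorem isPosOp_iff_isPositive : IsPosOp T ↔ T.IsPositive :=
  (ContinuousLinearMap.isPositive_iff T).symm

theorem exists_isPosSqrtOf_of_isPositive [CompleteSpace E] (hT : T.IsPositive) :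
    ∃ S, IsPosSqrtOf S T :=
  ⟨CFC.sqrt T,
    isPosOp_iff_isPositive.2 ((ContinuousLinearMap.nonneg_iff_isPositive _).1 (CFC.sqrt_nonneg T)),
    CFC.sqrt_mul_sqrt_self T ((ContinuousLinearMap.nonneg_iff_isPositive T).2 hT)⟩

theorem IsPosSqrtOf.inner_apply_eq (hS : IsPosSqrtOf S T) (z w : E) :
    ⟪w, T z⟫_ℂ = ⟪S w, S z⟫_ℂ := by
  rw [hS.1.1, ← hS.2, ContinuousLinearMap.comp_apply]

/-- The kernel `F(z, w) = ⟨T z, w⟩ - ⟨z, u⟩ - ⟨u, w⟩ + M²`. The arguments of each inner product are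
swapped, since Mathlib's inner product is conjugate-linear in the first one. -/
noncomputable def quadraticKernel (u : E) (T : E →L[ℂ] E) (M : ℝ) (z w : E) : ℂ :=
  ⟪w, T z⟫_ℂ - ⟪u, z⟫_ℂ - ⟪w, u⟫_ℂ + (M : ℂ) ^ 2

variable {u : E} {M : ℝ}

theorem IsPosSqrtOf.quadraticKernel_eq (hS : IsPosSqrtOf S T) (u' : E) (M : ℝ) (z w : E) :
    quadraticKernel (S u') T M z w =
      ⟪S w - u', S z - u'⟫_ℂ + ((M ^ 2 - ‖u'‖ ^ 2 : ℝ) : ℂ) := by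
  have inner_u' : ⟪u', u'⟫_ℂ = (‖u'‖ : ℂ) ^ 2 := inner_self_eq_norm_sq_to_K u'
  rw [quadraticKernel, hS.inner_apply_eq, hS.1.1 u' z, ← hS.1.1 w u', inner_sub_left,
    inner_sub_right, inner_sub_right, inner_u', hS.1.1]
  push_cast
  ring

theorem IsPosSqrtOf.isPSDKernel_quadraticKernel (hS : IsPosSqrtOf S T) {u' : E}
    (hu' : ‖u'‖ ≤ |M|) : IsPSDKernel (quadraticKernel (S u') T M) := by
  have const_nonneg : 0 ≤ M ^ 2 - ‖u'‖ ^ 2 := sub_nonneg.2 (sq_le_sq.2 (by rwa [abs_norm]))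
  rw [funext₂ (hS.quadraticKernel_eq u' M)]
  exact (IsPSDKernel.inner fun z => S z - u').add
    (IsPSDKernel.const (Complex.zero_le_real.2 const_nonneg))

theorem isPositive_of_quadraticKernel_diag_nonneg (h : ∀ z, 0 ≤ quadraticKernel u T M z z) :
    T.IsPositive := by
  refine isPositive_of_forall_nonneg_inner_add (c := (M : ℂ) ^ 2) fun z => ?_
  calc (0 : ℂ) ≤ (2⁻¹ : ℝ) • (quadraticKernel u T M z z + quadraticKernel u T M (-z) (-z)) :=
        smul_nonneg (by norm_num) (add_nonneg (h z) (h (-z)))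
    _ = ⟪z, T z⟫_ℂ + (M : ℂ) ^ 2 := by
        simp only [quadraticKernel, map_neg, inner_neg_left, inner_neg_right,
          Complex.real_smul]
        push_cast
        ring

theorem IsPosSqrtOf.exists_eq_apply_of_quadraticKernel_diag_nonneg [CompleteSpace E]
    (hS : IsPosSqrtOf S T) (h : ∀ z, 0 ≤ quadraticKernel u T M z z) :
    ∃ u', u = S u' ∧ ‖u'‖ ≤ |M| := by
  have two_mul_re_le (z : E) : 2 * (⟪u, z⟫_ℂ).re ≤ ‖S z‖ ^ 2 + M ^ 2 := by
    have re_nonneg := (Complex.nonneg_iff.1 (h z)).1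
    have inner_Sz : (⟪S z, S z⟫_ℂ).re = ‖S z‖ ^ 2 := inner_self_eq_norm_sq (𝕜 := ℂ) (S z)
    have inner_symm : (⟪z, u⟫_ℂ).re = (⟪u, z⟫_ℂ).re := inner_re_symm (𝕜 := ℂ) z u
    rw [quadraticKernel, hS.inner_apply_eq, ← Complex.ofReal_pow, Complex.add_re,
      Complex.sub_re, Complex.sub_re, Complex.ofReal_re, inner_Sz, inner_symm] at re_nonneg
    linarith
  obtain ⟨u', inner_u', norm_u'⟩ := exists_inner_comp_eq_of_norm_le (innerₛₗ ℂ u) S.toLinearMap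
    (abs_nonneg M) (norm_le_abs_mul_of_forall_two_mul_re_le (innerₛₗ ℂ u)
      ((normSeminorm ℂ E).comp S.toLinearMap) two_mul_re_le)
  exact ⟨u', ext_inner_right ℂ fun z => (inner_u' z).symm.trans (hS.1.1 u' z).symm, norm_u'⟩

end Operators

theorem statement3_general {E : Type*} [NormedAddCommGroup E] [InnerProductSpace ℂ E]
    [CompleteSpace E] (u : E) (T : E →L[ℂ] E) (M : ℝ) :
    (IsPSDKernel (quadraticKernel u T M) ↔ ∀ z : E, 0 ≤ quadraticKernel u T M z z) ∧
    ((∀ z : E, 0 ≤ quadraticKernel u T M z z) ↔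
      (∀ z : E, 0 ≤ ⟪T z, z⟫_ℂ) ∧
        ∃ S : E →L[ℂ] E, IsPosSqrtOf S T ∧ ∃ u' : E, u = S u' ∧ ‖u'‖ ≤ |M|) := by
  have psd_of_sqrt : (∃ S : E →L[ℂ] E, IsPosSqrtOf S T ∧ ∃ u' : E, u = S u' ∧ ‖u'‖ ≤ |M|) →
      IsPSDKernel (quadraticKernel u T M) := by
    rintro ⟨S, hS, u', rfl, norm_u'⟩
    exact hS.isPSDKernel_quadraticKernel norm_u'
  have sqrt_of_diag (h : ∀ z, 0 ≤ quadraticKernel u T M z z) : (∀ z : E, 0 ≤ ⟪T z, z⟫_ℂ) ∧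
      ∃ S : E →L[ℂ] E, IsPosSqrtOf S T ∧ ∃ u' : E, u = S u' ∧ ‖u'‖ ≤ |M| := by
    have T_pos := isPositive_of_quadraticKernel_diag_nonneg h
    obtain ⟨S, hS⟩ := exists_isPosSqrtOf_of_isPositive T_pos
    exact ⟨T_pos.inner_nonneg_left, S, hS, hS.exists_eq_apply_of_quadraticKernel_diag_nonneg h⟩
  exact ⟨⟨IsPSDKernel.diag_nonneg, fun h => psd_of_sqrt (sqrt_of_diag h).2⟩,
    ⟨sqrt_of_diag, fun h => (psd_of_sqrt h.2).diag_nonneg⟩⟩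

/-- for a self-adjoint `T`, `u ∈ E` and `M ∈ ℝ`, with
`F(z,w) = ⟨T z, w⟩ − ⟨z, u⟩ − ⟨u, w⟩ + M²`, the following are equivalent:
(a) `F` is a positive semi-definite kernel; (b) `F(z,z) ≥ 0` (a nonnegative real) for all `z`;
(c) `T` is positive and `u = T^{1/2} u'` for some `u'` with `‖u'‖ ≤ |M|`. -/
theorem statement3 {E : Type*} [NormedAddCommGroup E] [InnerProductSpace ℂ E]
    [CompleteSpace E] (u : E) (T : E →L[ℂ] E)
    (hT : ∀ x y : E, ⟪T x, y⟫_ℂ = ⟪x, T y⟫_ℂ) (M : ℝ) :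
    (IsPSDKernel (fun z w : E =>
        ⟪w, T z⟫_ℂ - ⟪u, z⟫_ℂ - ⟪w, u⟫_ℂ + (M : ℂ) ^ 2) ↔
      ∀ z : E, 0 ≤ ⟪z, T z⟫_ℂ - ⟪u, z⟫_ℂ - ⟪z, u⟫_ℂ + (M : ℂ) ^ 2) ∧
    ((∀ z : E, 0 ≤ ⟪z, T z⟫_ℂ - ⟪u, z⟫_ℂ - ⟪z, u⟫_ℂ + (M : ℂ) ^ 2) ↔
      (∀ z : E, 0 ≤ ⟪T z, z⟫_ℂ) ∧
        ∃ S : E →L[ℂ] E, IsPosSqrtOf S T ∧ ∃ u' : E, u = S u' ∧ ‖u'‖ ≤ |M|) :=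
  statement3_general u T M
end

section
/- Let X be a set and let F : X × X → ℂ be a positive semi-definite kernel on X. Then the function (x,y) ↦ exp(F(x,y)) − 1 is also a positive semi-definite kernel on X. -/
open scoped ComplexOrder

/-!
A positive semi-definite kernel is one all of whose Gram matrices are positive semi-definite, so by
the Schur product theorem these kernels are closed under pointwise products. They are also closed
under nonnegative scaling and pointwise convergent sums, hence under power series with nonnegative
coefficients, and `exp z - 1 = ∑ n, z ^ (n + 1) / (n + 1)!` is such a series.
-/

open scoped Matrix Nat

section QuadraticForm

variable {n : Type*} [Fintype n]

theorem star_dotProduct_mulVec_eq_sum_sum {R : Type*} [CommSemiring R] [StarRing R]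
    (A : Matrix n n R) (c : n → R) :
    star c ⬝ᵥ A *ᵥ c = ∑ j, ∑ l, c j * starRingEnd R (c l) * A l j := by
  simp only [dotProduct, Matrix.mulVec, Finset.mul_sum, Pi.star_apply, starRingEnd_apply]
  rw [Finset.sum_comm]
  refine Finset.sum_congr rfl fun j _ ↦ Finset.sum_congr rfl fun l _ ↦ ?_
  ring

-- Over `ℂ`, unlike over `ℝ`, a matrix with real-valued quadratic form is automatically Hermitian.
theorem posSemidef_iff_forall_star_dotProduct_mulVec_nonneg {A : Matrix n n ℂ} :
    A.PosSemidef ↔ ∀ c : n → ℂ, 0 ≤ star c ⬝ᵥ A *ᵥ c := by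
  refine ⟨fun hA ↦ hA.dotProduct_mulVec_nonneg, fun h ↦ ?_⟩
  classical
  rw [← Matrix.isPositive_toEuclideanLin_iff, LinearMap.isPositive_iff_complex]
  intro v
  have inner_eq : inner ℂ (A.toEuclideanLin v) v = star (star v.ofLp ⬝ᵥ A *ᵥ v.ofLp) := by
    rw [EuclideanSpace.inner_eq_star_dotProduct, Matrix.dotProduct_star, dotProduct_comm,
      Matrix.ofLp_toLpLin, Matrix.toLin'_apply]
  have inner_nonneg : 0 ≤ inner ℂ (A.toEuclideanLin v) v := by
    rw [inner_eq, star_nonneg_iff]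
    exact h v.ofLp
  exact ⟨RCLike.conj_eq_iff_re.mp (IsSelfAdjoint.of_nonneg inner_nonneg),
    (RCLike.nonneg_iff.mp inner_nonneg).1⟩

end QuadraticForm

section Kernel

variable {X : Type*} {Φ Ψ : X → X → ℂ}

theorem isPSDKernel_iff_forall_posSemidef :
    IsPSDKernel Φ ↔
      ∀ (m : ℕ) (x : Fin m → X), (Matrix.of fun i j ↦ Φ (x i) (x j)).PosSemidef := by
  simp only [IsPSDKernel, posSemidef_iff_forall_star_dotProduct_mulVec_nonneg,
    star_dotProduct_mulVec_eq_sum_sum, Matrix.of_apply]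

namespace IsPSDKernel

theorem one : IsPSDKernel (1 : X → X → ℂ) := by
  refine isPSDKernel_iff_forall_posSemidef.mpr fun m x ↦ ?_
  simpa [Matrix.vecMulVec] using Matrix.posSemidef_vecMulVec_self_star (1 : Fin m → ℂ)

theorem mul (hΦ : IsPSDKernel Φ) (hΨ : IsPSDKernel Ψ) : IsPSDKernel (Φ * Ψ) := by
  rw [isPSDKernel_iff_forall_posSemidef] at hΦ hΨ ⊢
  exact fun m x ↦ (hΦ m x).hadamard (hΨ m x)

theorem pow (hΦ : IsPSDKernel Φ) (n : ℕ) : IsPSDKernel (Φ ^ n) := by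
  induction n with
  | zero => simpa only [pow_zero] using one
  | succ n ih => simpa only [pow_succ] using ih.mul hΦ

theorem smul (hΦ : IsPSDKernel Φ) {a : ℂ} (ha : 0 ≤ a) : IsPSDKernel (a • Φ) := by
  rw [isPSDKernel_iff_forall_posSemidef] at hΦ ⊢
  exact fun m x ↦ (hΦ m x).smul ha

theorem of_hasSum {ι : Type*} {K : ι → X → X → ℂ} (hK : ∀ i, IsPSDKernel (K i))
    (hΨ : ∀ x y, HasSum (fun i ↦ K i x y) (Ψ x y)) : IsPSDKernel Ψ := fun m x c ↦
  HasSum.nonneg (fun i ↦ hK i m x c) <|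
    hasSum_sum fun _ _ ↦ hasSum_sum fun _ _ ↦ (hΨ _ _).mul_left _

theorem of_hasSum_mul_pow {ι : Type*} {a : ι → ℂ} {k : ι → ℕ} (hΦ : IsPSDKernel Φ)
    (ha : ∀ i, 0 ≤ a i) (hΨ : ∀ x y, HasSum (fun i ↦ a i * Φ x y ^ k i) (Ψ x y)) :
    IsPSDKernel Ψ :=
  of_hasSum (fun i ↦ (hΦ.pow (k i)).smul (ha i)) hΨ

end IsPSDKernel

end Kernel

theorem hasSum_exp_sub_one (𝕂 : Type*) {𝔸 : Type*} [NontriviallyNormedField 𝕂] [CharZero 𝕂]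
    [ContinuousSMul ℚ 𝕂] [NormedRing 𝔸] [NormedAlgebra 𝕂 𝔸] [CompleteSpace 𝔸] (x : 𝔸) :
    HasSum (fun n : ℕ ↦ ((n + 1)! : 𝕂)⁻¹ • x ^ (n + 1)) (NormedSpace.exp x - 1) := by
  simpa using (hasSum_nat_add_iff' 1).mpr (NormedSpace.exp_series_hasSum_exp' (𝕂 := 𝕂) x)

/-- if `F` is a positive semi-definite kernel on `X`, then so is
`(x,y) ↦ exp (F x y) − 1`. -/
theorem statement6 {X : Type*} (F : X → X → ℂ) (hF : IsPSDKernel F) :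
    IsPSDKernel (fun x y : X => Complex.exp (F x y) - 1) :=
  hF.of_hasSum_mul_pow (fun n ↦ inv_nonneg.mpr (Nat.cast_nonneg (n + 1)!))
    fun x y ↦ Complex.exp_eq_exp_ℂ ▸ hasSum_exp_sub_one ℂ (F x y)
end

section
/- Let E be a complex Hilbert space, A a bounded linear operator on E with ‖A‖ ≤ 1, and b ∈ E. Then ⟨Aζ, b⟩ = 0 for every ζ ∈ E with ‖Aζ‖ = ‖ζ‖ if and only if A*b belongs to the closure of the range of (I − A*A)^{1/2}. -/
open scoped InnerProductSpace ComplexOrder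
open ContinuousLinearMap

/-!
If `D* D = 1 - A* A`, then `‖A ζ‖² + ‖D ζ‖² = ‖ζ‖²`, so the vectors whose norm `A` preserves are
exactly those in `ker D`. The condition `⟪b, A ζ⟫ = ⟪A* b, ζ⟫ = 0` for all of them therefore says
`A* b ∈ (ker D)ᗮ`, and `(ker D)ᗮ` is the closure of the range of `D*`. A positive square root `S`
of `1 - A* A` is an instance of such a `D`, with `D* = S`.
-/

section Adjoint

variable {𝕜 E F G : Type*} [RCLike 𝕜]
  [NormedAddCommGroup E] [InnerProductSpace 𝕜 E] [CompleteSpace E]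
  [NormedAddCommGroup F] [InnerProductSpace 𝕜 F] [CompleteSpace F]
  [NormedAddCommGroup G] [InnerProductSpace 𝕜 G] [CompleteSpace G]

theorem mem_closure_range_adjoint_iff (T : E →L[𝕜] F) (x : E) :
    x ∈ closure (Set.range (adjoint T)) ↔ ∀ ζ, T ζ = 0 → ⟪x, ζ⟫_𝕜 = 0 := by
  have closure_eq : closure (Set.range (adjoint T)) = (T.kerᗮ : Set E) := by
    rw [orthogonal_ker, Submodule.topologicalClosure_coe, LinearMap.coe_range, coe_coe]
  rw [closure_eq, SetLike.mem_coe, Submodule.mem_orthogonal']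
  rfl

theorem norm_sq_add_norm_sq_of_adjoint_comp_self_eq {A : E →L[𝕜] F} {D : E →L[𝕜] G}
    (hD : adjoint D ∘L D = 1 - adjoint A ∘L A) (ζ : E) :
    ‖A ζ‖ ^ 2 + ‖D ζ‖ ^ 2 = ‖ζ‖ ^ 2 := by
  rw [apply_norm_sq_eq_inner_adjoint_left A, apply_norm_sq_eq_inner_adjoint_left D, hD,
    sub_apply, one_apply_eq_self, inner_sub_left, map_sub, inner_self_eq_norm_sq, add_sub_cancel]

theorem norm_apply_eq_norm_iff_of_adjoint_comp_self_eq {A : E →L[𝕜] F} {D : E →L[𝕜] G}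
    (hD : adjoint D ∘L D = 1 - adjoint A ∘L A) (ζ : E) :
    ‖A ζ‖ = ‖ζ‖ ↔ D ζ = 0 := by
  rw [← sq_eq_sq₀ (norm_nonneg _) (norm_nonneg _),
    ← norm_sq_add_norm_sq_of_adjoint_comp_self_eq hD ζ, left_eq_add, sq_eq_zero_iff, norm_eq_zero]

theorem statement8_general (A : E →L[𝕜] F) (b : F) (D : E →L[𝕜] G)
    (hD : adjoint D ∘L D = 1 - adjoint A ∘L A) :
    (∀ ζ : E, ‖A ζ‖ = ‖ζ‖ → ⟪b, A ζ⟫_𝕜 = 0) ↔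
      adjoint A b ∈ closure (Set.range (adjoint D)) := by
  simp only [mem_closure_range_adjoint_iff, norm_apply_eq_norm_iff_of_adjoint_comp_self_eq hD,
    adjoint_inner_left]

end Adjoint

section PosSqrt

variable {E : Type*} [NormedAddCommGroup E] [InnerProductSpace ℂ E] [CompleteSpace E]
  {S T : E →L[ℂ] E}

theorem IsPosOp.adjoint_eq (hT : IsPosOp T) : adjoint T = T :=
  ((eq_adjoint_iff T T).2 hT.1).symm

theorem IsPosSqrtOf.adjoint_comp_self (hS : IsPosSqrtOf S T) : adjoint S ∘L S = T := by
  rw [hS.1.adjoint_eq, hS.2]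

end PosSqrt

/-- for `‖A‖ ≤ 1` and `b ∈ E`, one has `⟨A ζ, b⟩ = 0` for every `ζ` with
`‖A ζ‖ = ‖ζ‖` iff `A* b` lies in the closure of the range of `(I − A*A)^{1/2}`.
(The paper's `⟨A ζ, b⟩` is `⟪b, A ζ⟫_ℂ` in Mathlib's convention.) -/
theorem statement8 {E : Type*} [NormedAddCommGroup E] [InnerProductSpace ℂ E]
    [CompleteSpace E] (A : E →L[ℂ] E) (hA : ‖A‖ ≤ 1) (b : E)
    (S : E →L[ℂ] E) (hS : IsPosSqrtOf S (1 - (adjoint A) ∘L A)) :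
    (∀ ζ : E, ‖A ζ‖ = ‖ζ‖ → ⟪b, A ζ⟫_ℂ = 0) ↔
      adjoint A b ∈ closure (Set.range ⇑S) := by
  simpa only [hS.1.adjoint_eq] using statement8_general A b S hS.adjoint_comp_self
end

section
/- Let H = ℓ² be the Hilbert space of square-summable complex sequences indexed by the positive integers, with standard orthonormal basis (e_m)_{m≥1}. Let (α_m)_{m≥1} be real numbers with (1 − m^{−3})^{1/2} < α_m < 1 for every m ≥ 1, let A be the bounded diagonal operator on H determined by (Az)_m = α_m z_m for all z ∈ H and m ≥ 1, and let b ∈ H be the vector with b_m = 1/m for all m ≥ 1. Then sup_{z ∈ H} (‖Az + b‖² − ‖z‖²) = +∞; that is, for every real C there exists z ∈ H with ‖Az + b‖² − ‖z‖² > C. (Consequently, for φ(z) = Az + b, the composition operator C_φ is not bounded on the Segal–Bargmann space over H, even though ⟨Aζ, b⟩ = 0 whenever ‖Aζ‖ = ‖ζ‖.) -/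
/-!
Along a unit eigenvector `v` of `A` with eigenvalue `a`, the function `z ↦ ‖A z + b‖² - ‖z‖²` is a
quadratic function of the coefficient of `v`. If `1 - ‖a‖² ≤ δ`, it reaches at least
`‖b‖² + ‖a‖² ‖⟪v, b⟫‖² / δ`. For the diagonal operator, `v = e_m`, `δ = m⁻³` and `‖⟪e_m, b⟫‖ = m⁻¹`
make this at least `m - 1`.
-/

open scoped ComplexConjugate InnerProductSpace

section Eigenvector

variable {𝕜 E : Type*} [RCLike 𝕜] [NormedAddCommGroup E] [InnerProductSpace 𝕜 E]

lemma norm_smul_smul_add_sq_sub_norm_smul_sq {v : E} (hv : ‖v‖ = 1) (b : E) (a c : 𝕜) :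
    ‖a • c • v + b‖ ^ 2 - ‖c • v‖ ^ 2 =
      ‖b‖ ^ 2 + 2 * RCLike.re (conj (a * c) * ⟪v, b⟫_𝕜) - (1 - ‖a‖ ^ 2) * ‖c‖ ^ 2 := by
  rw [smul_smul, norm_add_sq (𝕜 := 𝕜), inner_smul_left, norm_smul, norm_smul, hv, norm_mul]
  ring

lemma exists_le_norm_map_add_sq_sub_norm_sq_of_eigenvector {A : E →ₗ[𝕜] E} {v : E} {a : 𝕜}
    (hv : ‖v‖ = 1) (hAv : A v = a • v) (b : E) {δ : ℝ} (hδ : 0 < δ) (ha : 1 - ‖a‖ ^ 2 ≤ δ) :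
    ∃ z : E, ‖b‖ ^ 2 + ‖a‖ ^ 2 * ‖⟪v, b⟫_𝕜‖ ^ 2 / δ ≤ ‖A z + b‖ ^ 2 - ‖z‖ ^ 2 := by
  -- For `δ = 1 - ‖a‖²`, this `c` maximizes the quadratic function.
  set c : 𝕜 := conj a * ⟪v, b⟫_𝕜 / (δ : 𝕜) with hc
  set q : ℝ := ‖a‖ ^ 2 * ‖⟪v, b⟫_𝕜‖ ^ 2 / δ with hq
  have norm_c_sq : ‖c‖ ^ 2 = q / δ := by
    rw [hc, hq, norm_div, norm_mul, RCLike.norm_conj, RCLike.norm_of_nonneg hδ.le]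
    field_simp
  have cross_term : conj (a * c) * ⟪v, b⟫_𝕜 = (q : 𝕜) := by
    have expand :
        conj (a * c) * ⟪v, b⟫_𝕜 = conj a * a * (conj ⟪v, b⟫_𝕜 * ⟪v, b⟫_𝕜) / δ := by
      simp only [hc, map_mul, map_div₀, RCLike.conj_conj, RCLike.conj_ofReal]
      ring
    rw [expand, RCLike.conj_mul, RCLike.conj_mul, hq]
    push_cast
    rfl
  have quadratic_term : (1 - ‖a‖ ^ 2) * ‖c‖ ^ 2 ≤ q := calc
    (1 - ‖a‖ ^ 2) * ‖c‖ ^ 2 ≤ δ * ‖c‖ ^ 2 := by gcongr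
    _ = q := by rw [norm_c_sq, mul_div_cancel₀ _ hδ.ne']
  refine ⟨c • v, ?_⟩
  rw [map_smul, hAv, smul_comm, norm_smul_smul_add_sq_sub_norm_smul_sq hv, cross_term,
    RCLike.ofReal_re]
  linarith

end Eigenvector

section Diagonal

variable {𝕜 ι : Type*} [RCLike 𝕜]

lemma map_lp_single_of_diagonal [DecidableEq ι] {α : ι → 𝕜}
    {A : lp (fun _ : ι => 𝕜) 2 → lp (fun _ : ι => 𝕜) 2} (hA : ∀ z i, A z i = α i * z i)
    (i : ι) (x : 𝕜) : A (lp.single 2 i x) = α i • lp.single 2 i x := by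
  ext k
  rw [hA, lp.coeFn_smul, Pi.smul_apply, smul_eq_mul]
  obtain rfl | hk := eq_or_ne k i
  · rfl
  · simp [lp.single_apply, hk]

lemma exists_le_norm_map_add_sq_sub_norm_sq_of_diagonal {α : ι → 𝕜}
    {A : lp (fun _ : ι => 𝕜) 2 →ₗ[𝕜] lp (fun _ : ι => 𝕜) 2} (hA : ∀ z i, A z i = α i * z i)
    (b : lp (fun _ : ι => 𝕜) 2) (i : ι) {δ : ℝ} (hδ : 0 < δ) (hα : 1 - ‖α i‖ ^ 2 ≤ δ) :
    ∃ z, ‖b‖ ^ 2 + ‖α i‖ ^ 2 * ‖b i‖ ^ 2 / δ ≤ ‖A z + b‖ ^ 2 - ‖z‖ ^ 2 := by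
  classical
  have norm_basis : ‖lp.single (E := fun _ : ι => 𝕜) 2 i 1‖ = 1 := by
    rw [lp.norm_single (by norm_num), norm_one]
  have inner_basis : ⟪lp.single 2 i 1, b⟫_𝕜 = b i := by
    rw [lp.inner_single_left, RCLike.inner_apply, map_one, mul_one]
  simpa only [inner_basis] using exists_le_norm_map_add_sq_sub_norm_sq_of_eigenvector norm_basis
    (map_lp_single_of_diagonal hA i 1) b hδ hα

end Diagonal

lemma sub_one_le_mul_inv_sq_div_inv_cube {x s : ℝ} (hx : 1 ≤ x) (hs : 1 - x⁻¹ ^ 3 ≤ s) :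
    x - 1 ≤ s * x⁻¹ ^ 2 / x⁻¹ ^ 3 := by
  have : 0 < x := one_pos.trans_le hx
  calc
    x - 1 ≤ x - x⁻¹ ^ 2 := by gcongr; exact pow_le_one₀ (by positivity) (inv_le_one_of_one_le₀ hx)
    _ = (1 - x⁻¹ ^ 3) * x := by field_simp
    _ ≤ s * x := by gcongr
    _ = s * x⁻¹ ^ 2 / x⁻¹ ^ 3 := by field_simp

theorem statement10_general {𝕜 : Type*} [RCLike 𝕜] {α : ℕ+ → 𝕜}
    (hα : ∀ m : ℕ+, 1 - ((m : ℕ) : ℝ)⁻¹ ^ 3 ≤ ‖α m‖ ^ 2)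
    {A : lp (fun _ : ℕ+ => 𝕜) 2 →ₗ[𝕜] lp (fun _ : ℕ+ => 𝕜) 2}
    (hA : ∀ z m, A z m = α m * z m)
    {b : lp (fun _ : ℕ+ => 𝕜) 2} (hb : ∀ m : ℕ+, ‖b m‖ = ((m : ℕ) : ℝ)⁻¹) (C : ℝ) :
    ∃ z, C < ‖A z + b‖ ^ 2 - ‖z‖ ^ 2 := by
  obtain ⟨n, hn⟩ := exists_nat_gt C
  let m : ℕ+ := n.succPNat
  have hm : C < ((m : ℕ) : ℝ) - 1 := by simpa [m] using hn
  have one_le_m : 1 ≤ ((m : ℕ) : ℝ) := by exact_mod_cast one_le (a := m)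
  obtain ⟨z, hz⟩ := exists_le_norm_map_add_sq_sub_norm_sq_of_diagonal hA b m
    (δ := ((m : ℕ) : ℝ)⁻¹ ^ 3) (by positivity) (sub_le_comm.mp (hα m))
  refine ⟨z, ?_⟩
  calc
    C < ((m : ℕ) : ℝ) - 1 := hm
    _ ≤ ‖α m‖ ^ 2 * ‖b m‖ ^ 2 / ((m : ℕ) : ℝ)⁻¹ ^ 3 := by
      rw [hb]
      exact sub_one_le_mul_inv_sq_div_inv_cube one_le_m (hα m)
    _ ≤ ‖b‖ ^ 2 + ‖α m‖ ^ 2 * ‖b m‖ ^ 2 / ((m : ℕ) : ℝ)⁻¹ ^ 3 :=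
      le_add_of_nonneg_left (sq_nonneg _)
    _ ≤ ‖A z + b‖ ^ 2 - ‖z‖ ^ 2 := hz

/-- on `H = ℓ²(ℕ+, ℂ)`, let `A` be the diagonal operator with diagonal entries
`α m` satisfying `(1 − m⁻³)^{1/2} < α m < 1`, and let `b` be the vector with entries `1/m`.
Then `sup_{z} (‖A z + b‖² − ‖z‖²) = ∞`, i.e. for every real `C` there is `z` with
`‖A z + b‖² − ‖z‖² > C` (so the composition operator induced by `z ↦ A z + b` is unbounded on
the Segal–Bargmann space over `H`). -/
theorem statement10 (α : ℕ+ → ℝ)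
    (hα : ∀ m : ℕ+, Real.sqrt (1 - (((m : ℕ) : ℝ))⁻¹ ^ 3) < α m ∧ α m < 1)
    (A : lp (fun _ : ℕ+ => ℂ) 2 →L[ℂ] lp (fun _ : ℕ+ => ℂ) 2)
    (hA : ∀ (z : lp (fun _ : ℕ+ => ℂ) 2) (m : ℕ+), (A z) m = (α m : ℂ) * z m)
    (b : lp (fun _ : ℕ+ => ℂ) 2)
    (hb : ∀ m : ℕ+, b m = 1 / ((m : ℕ) : ℂ)) :
    ∀ C : ℝ, ∃ z : lp (fun _ : ℕ+ => ℂ) 2, C < ‖A z + b‖ ^ 2 - ‖z‖ ^ 2 :=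
  statement10_general (A := A.toLinearMap)
    (fun m => by simpa using (Real.lt_sq_of_sqrt_lt (hα m).1).le) hA (fun m => by simp [hb])
end

section
/- Let n ≥ 1 and let F : ℂⁿ → ℂ be an entire function for which there exists a real constant C such that |F(z)|² ≤ ‖z‖² + C for all z ∈ ℂⁿ. Then F is affine with linear part of norm at most one: there exists a vector a ∈ ℂⁿ with ‖a‖ ≤ 1 such that F(z) = F(0) + ⟨z, a⟩ for all z ∈ ℂⁿ. -/
open scoped InnerProductSpace

/-!
Cauchy's estimate on large circles turns linear growth of an entire map `f` into a Lipschitz bound.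
Then every difference `z ↦ f (z + h) - f z` is entire and bounded, hence constant by Liouville's
theorem, so the derivative of `f` is the same at all points. Applied to `F`, the same estimate gives
`‖F' 0‖ ≤ 1`, and the Riesz representation of `F' 0` is the vector `a`.
-/

section LinearGrowth

variable {E G : Type*} [NormedAddCommGroup E] [NormedSpace ℂ E]
  [NormedAddCommGroup G] [NormedSpace ℂ G] {A B : ℝ}

theorem norm_deriv_zero_le_of_linear_growth {g : ℂ → G} (hg : Differentiable ℂ g)
    (hgrowth : ∀ t, ‖g t‖ ≤ A * ‖t‖ + B) : ‖deriv g 0‖ ≤ A := by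
  have cauchy_estimate (R : ℝ) (hR : 0 < R) : ‖deriv g 0‖ ≤ A + B / R := by
    have bound_on_sphere : ∀ t ∈ Metric.sphere (0 : ℂ) R, ‖g t‖ ≤ A * R + B := fun t ht ↦ by
      simpa only [mem_sphere_zero_iff_norm.1 ht] using hgrowth t
    calc
      ‖deriv g 0‖ ≤ (A * R + B) / R :=
        Complex.norm_deriv_le_of_forall_mem_sphere_norm_le hR hg.diffContOnCl bound_on_sphere
      _ = A + B / R := by field_simp
  have tendsto_bound : Filter.Tendsto (fun R : ℝ ↦ A + B / R) Filter.atTop (nhds A) := by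
    simpa only [add_zero, id_eq] using (tendsto_const_nhds (x := A)).add
      ((tendsto_const_nhds (x := B)).div_atTop Filter.tendsto_id)
  exact ge_of_tendsto tendsto_bound ((Filter.eventually_gt_atTop 0).mono cauchy_estimate)

variable {f : E → G}

theorem norm_fderiv_apply_le_of_linear_growth (hf : Differentiable ℂ f)
    (hgrowth : ∀ z, ‖f z‖ ≤ A * ‖z‖ + B) (c v : E) : ‖fderiv ℂ f c v‖ ≤ A * ‖v‖ := by
  have growth_on_line (t : ℂ) : ‖f (c + t • v)‖ ≤ (A * ‖v‖) * ‖t‖ + (|A| * ‖c‖ + B) := by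
    have norm_perturbation : |‖c + t • v‖ - ‖t • v‖| ≤ ‖c‖ := by
      simpa only [add_sub_cancel_right] using abs_norm_sub_norm_le (c + t • v) (t • v)
    have slope_perturbation : A * (‖c + t • v‖ - ‖t • v‖) ≤ |A| * ‖c‖ := by
      grw [le_abs_self (A * _), abs_mul, norm_perturbation]
    calc
      ‖f (c + t • v)‖ ≤ A * ‖c + t • v‖ + B := hgrowth _
      _ = A * ‖t • v‖ + A * (‖c + t • v‖ - ‖t • v‖) + B := by ring
      _ ≤ A * ‖t • v‖ + |A| * ‖c‖ + B := by gcongr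
      _ = (A * ‖v‖) * ‖t‖ + (|A| * ‖c‖ + B) := by rw [norm_smul]; ring
  rw [← (hf c).lineDeriv_eq_fderiv]
  exact norm_deriv_zero_le_of_linear_growth (by fun_prop) growth_on_line

theorem lipschitzWith_of_linear_growth (hf : Differentiable ℂ f)
    (hgrowth : ∀ z, ‖f z‖ ≤ A * ‖z‖ + B) : LipschitzWith ‖A‖₊ f :=
  lipschitzWith_of_nnnorm_fderiv_le hf fun c ↦
    (fderiv ℂ f c).opNorm_le_bound (norm_nonneg A) fun v ↦
      (norm_fderiv_apply_le_of_linear_growth hf hgrowth c v).trans <| by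
        gcongr
        exact Real.le_norm_self A

theorem fderiv_eq_fderiv_of_lipschitzWith {K : NNReal} (hf : Differentiable ℂ f)
    (hLip : LipschitzWith K f) (x y : E) : fderiv ℂ f x = fderiv ℂ f y := by
  have differentiable_shift : Differentiable ℂ fun z ↦ f (z + (y - x)) := by fun_prop
  have bounded_difference : Bornology.IsBounded (Set.range fun z ↦ f (z + (y - x)) - f z) := by
    refine isBounded_iff_forall_norm_le.2 ⟨K * ‖y - x‖, Set.forall_mem_range.2 fun z ↦ ?_⟩
    simpa only [add_sub_cancel_left] using hLip.norm_sub_le (z + (y - x)) z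
  obtain ⟨d, hd⟩ :=
    (differentiable_shift.sub hf).exists_const_forall_eq_of_bounded bounded_difference
  have shift_eq : (fun z ↦ f (z + (y - x))) = fun z ↦ f z + d :=
    funext fun z ↦ sub_eq_iff_eq_add'.1 (hd z)
  calc
    fderiv ℂ f x = fderiv ℂ (fun z ↦ f z + d) x := (fderiv_add_const d).symm
    _ = fderiv ℂ f (x + (y - x)) := by rw [← shift_eq, fderiv_comp_add_right]
    _ = fderiv ℂ f y := by rw [add_sub_cancel]

theorem eq_add_fderiv_of_linear_growth (hf : Differentiable ℂ f)
    (hgrowth : ∀ z, ‖f z‖ ≤ A * ‖z‖ + B) (z : E) : f z = f 0 + fderiv ℂ f 0 z := by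
  have same_fderiv (x : E) : fderiv ℂ f x = fderiv ℂ (fun w ↦ f 0 + fderiv ℂ f 0 w) x := by
    rw [fderiv_const_add, ContinuousLinearMap.fderiv]
    exact fderiv_eq_fderiv_of_lipschitzWith hf (lipschitzWith_of_linear_growth hf hgrowth) x 0
  exact congrFun (eq_of_fderiv_eq hf (by fun_prop) same_fderiv 0 (by simp)) z

end LinearGrowth

theorem sqrt_add_le_sqrt_add_sqrt (x y : ℝ) : √(x + y) ≤ √x + √y := by
  have le_sq_sqrt (t : ℝ) : t ≤ √t ^ 2 := (Real.sqrt_le_iff.1 le_rfl).2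
  refine Real.sqrt_le_iff.2 ⟨by positivity, ?_⟩
  calc
    x + y ≤ √x ^ 2 + √y ^ 2 := add_le_add (le_sq_sqrt x) (le_sq_sqrt y)
    _ ≤ (√x + √y) ^ 2 := pow_add_pow_le x.sqrt_nonneg y.sqrt_nonneg two_ne_zero

theorem statement19_general {E : Type*} [NormedAddCommGroup E] [InnerProductSpace ℂ E]
    [CompleteSpace E] (F : E → ℂ) (hF : Differentiable ℂ F)
    (C : ℝ) (hC : ∀ z : E, ‖F z‖ ^ 2 ≤ ‖z‖ ^ 2 + C) :
    ∃ a : E, ‖a‖ ≤ 1 ∧ ∀ z : E, F z = F 0 + ⟪a, z⟫_ℂ := by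
  have linear_growth (z : E) : ‖F z‖ ≤ 1 * ‖z‖ + √C :=
    calc
      ‖F z‖ ≤ √(‖z‖ ^ 2 + C) := Real.le_sqrt_of_sq_le (hC z)
      _ ≤ √(‖z‖ ^ 2) + √C := sqrt_add_le_sqrt_add_sqrt _ _
      _ = 1 * ‖z‖ + √C := by rw [Real.sqrt_sq (norm_nonneg z), one_mul]
  refine ⟨(InnerProductSpace.toDual ℂ E).symm (fderiv ℂ F 0), ?_, fun z ↦ ?_⟩
  · rw [LinearIsometryEquiv.norm_map]
    exact (fderiv ℂ F 0).opNorm_le_bound zero_le_one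
      (norm_fderiv_apply_le_of_linear_growth hF linear_growth 0)
  · rw [InnerProductSpace.toDual_symm_apply]
    exact eq_add_fderiv_of_linear_growth hF linear_growth z

/-- if `F : ℂⁿ → ℂ` is entire and `|F z|² ≤ ‖z‖² + C` for all `z`, then `F` is
affine with linear part of norm at most one: `F z = F 0 + ⟨z, a⟩` for some `a` with `‖a‖ ≤ 1`
(the paper's `⟨z, a⟩` is `⟪a, z⟫_ℂ` in Mathlib's convention). -/
theorem statement19 (n : ℕ) (hn : 1 ≤ n)
    (F : EuclideanSpace ℂ (Fin n) → ℂ) (hF : Differentiable ℂ F)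
    (C : ℝ) (hC : ∀ z : EuclideanSpace ℂ (Fin n), ‖F z‖ ^ 2 ≤ ‖z‖ ^ 2 + C) :
    ∃ a : EuclideanSpace ℂ (Fin n), ‖a‖ ≤ 1 ∧
      ∀ z : EuclideanSpace ℂ (Fin n), F z = F 0 + ⟪a, z⟫_ℂ :=
  statement19_general F hF C hC
end
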